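/- Let n ≥ 1, let γ > 0, let δ > 0, and let φ : ℝ → ℝⁿ be continuous with |φ(s)| ≤ φ_M for all s ≥ 0, where φ_M ≥ 0. Assume that for every k ∈ ℕ, φ is exciting on [kδ, (k+1)δ] with level η > 0, and set α = 2ηγ/(1 + φ_M²γδ)². Then 0 < α < 1 and every solution x : [0,∞) → ℝⁿ of the gradient-flow error dynamics x'(t) = −γ⟨φ(t), x(t)⟩φ(t) satisfies |x(jδ)| ≤ (1 − α)^{j/2} |x(0)| for every j ∈ ℕ. -/

import Mathlib

open scoped RealInnerProductSpace

/-!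
Write `f t = ⟪φ t, x t⟫`. Along a solution `|x|²` decreases over a window at the exact rate
`2γ ∫ f²`, so it suffices to bound this integral below. Excitation bounds `∫ ⟪φ s, x a⟫² ds` below
for the state `x a` frozen at the start of the window, and freezing costs little: the solution has
moved by at most `γ φ_M ∫ |f|`, so `|⟪φ s, x a⟫| ≤ |f s| + φ_M² γ ∫ |f|`. By Cauchy–Schwarz the
`L²` norm of the right-hand side is at most `1 + φ_M² γ δ` times that of `f`.
-/

open MeasureTheory Set

section IntervalIntegral

variable {a b : ℝ} {g : ℝ → ℝ}

lemma sq_intervalIntegral_le_sub_mul (hab : a ≤ b) (hg : IntervalIntegrable g volume a b)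
    (hg_sq : IntervalIntegrable (fun t ↦ g t ^ 2) volume a b) :
    (∫ t in a..b, g t) ^ 2 ≤ (b - a) * ∫ t in a..b, g t ^ 2 := by
  obtain rfl | hlt := hab.eq_or_lt
  · simp
  have hpos : 0 < b - a := sub_pos.2 hlt
  have jensen : (⨍ t in a..b, g t) ^ 2 ≤ ⨍ t in a..b, g t ^ 2 :=
    even_two.convexOn_pow.map_set_average_le (by fun_prop) isClosed_univ
      (by simp [uIoc_of_le hab, hlt]) (by simp [uIoc_of_le hab]) (by simp) hg.def' hg_sq.def'
  rw [interval_average_eq_div, interval_average_eq_div, div_pow,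
    div_le_div_iff₀ (by positivity) hpos] at jensen
  exact le_of_mul_le_mul_right (by linarith) hpos

lemma integral_add_mul_integral_sq_le {c : ℝ} (hab : a ≤ b) (hc : 0 ≤ c)
    (hg : IntervalIntegrable g volume a b)
    (hg_sq : IntervalIntegrable (fun t ↦ g t ^ 2) volume a b) :
    ∫ s in a..b, (g s + c * ∫ t in a..b, g t) ^ 2 ≤
      (1 + c * (b - a)) ^ 2 * ∫ s in a..b, g s ^ 2 := by
  set I := ∫ t in a..b, g t with hI
  set G := ∫ t in a..b, g t ^ 2 with hG
  have cauchy_schwarz : I ^ 2 ≤ (b - a) * G := sq_intervalIntegral_le_sub_mul hab hg hg_sq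
  have : 0 ≤ b - a := sub_nonneg.2 hab
  calc ∫ s in a..b, (g s + c * I) ^ 2
      = ∫ s in a..b, (g s ^ 2 + 2 * c * I * g s + (c * I) ^ 2) := by
        congr! 2 with s; ring
    _ = G + (2 * c + c ^ 2 * (b - a)) * I ^ 2 := by
        rw [intervalIntegral.integral_add (hg_sq.add (hg.const_mul _)) (by simp),
          intervalIntegral.integral_add hg_sq (hg.const_mul _),
          intervalIntegral.integral_const_mul, intervalIntegral.integral_const, ← hI, ← hG,
          smul_eq_mul]
        ring
    _ ≤ G + (2 * c + c ^ 2 * (b - a)) * ((b - a) * G) := by gcongr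
    _ = (1 + c * (b - a)) ^ 2 * G := by ring

end IntervalIntegral

section GradientFlow

variable {E : Type*} [NormedAddCommGroup E] [InnerProductSpace ℝ E]
  {φ x : ℝ → E} {γ M η a b : ℝ} {S : Set ℝ}

/-- The signal `φ` is exciting on `[a, b]` with level `η`: its Gram operator
`∫ s in a..b, φ s (φ s)ᵀ` dominates `η` times the identity as a quadratic form. -/
def IsExciting (φ : ℝ → E) (a b η : ℝ) : Prop :=
  ∀ v : E, η * ‖v‖ ^ 2 ≤ ∫ s in a..b, ⟪φ s, v⟫ ^ 2

lemma IsExciting.level_le_sq_mul_sub [Nontrivial E] (hφ : IsExciting φ a b η) (hab : a ≤ b)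
    (hM : ∀ t ∈ Icc a b, ‖φ t‖ ≤ M) : η ≤ M ^ 2 * (b - a) := by
  obtain ⟨v, hv⟩ := exists_norm_eq E zero_le_one
  have integrand_le : ∀ t ∈ uIoc a b, ‖⟪φ t, v⟫ ^ 2‖ ≤ M ^ 2 := fun t ht ↦ by
    have hle := norm_inner_le_norm (𝕜 := ℝ) (φ t) v
    rw [hv, mul_one] at hle
    rw [norm_pow]
    gcongr
    exact hle.trans (hM t (Ioc_subset_Icc_self (uIoc_of_le hab ▸ ht)))
  calc η = η * ‖v‖ ^ 2 := by rw [hv]; ring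
    _ ≤ ∫ t in a..b, ⟪φ t, v⟫ ^ 2 := hφ v
    _ ≤ M ^ 2 * |b - a| :=
        (le_abs_self _).trans (intervalIntegral.norm_integral_le_of_norm_le_const integrand_le)
    _ = M ^ 2 * (b - a) := by rw [abs_of_nonneg (sub_nonneg.2 hab)]

/-- The curve `x` solves the gradient-flow error dynamics `ẋ = -γ ⟪φ, x⟫ φ` on `S`; derivatives are
taken within `S`, hence one-sided at the endpoints of an interval. -/
def IsGradientFlowOn (γ : ℝ) (φ x : ℝ → E) (S : Set ℝ) : Prop :=
  IsIntegralCurveOn x (fun t y ↦ -(γ * ⟪φ t, y⟫) • φ t) S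

namespace IsGradientFlowOn

lemma mono {T : Set ℝ} (hx : IsGradientFlowOn γ φ x S) (hT : T ⊆ S) : IsGradientFlowOn γ φ x T :=
  IsIntegralCurveOn.mono hx hT

lemma continuousOn (hx : IsGradientFlowOn γ φ x S) : ContinuousOn x S :=
  IsIntegralCurveOn.continuousOn hx

lemma hasDerivAt (hx : IsGradientFlowOn γ φ x (Icc a b)) {t : ℝ} (ht : t ∈ Ioo a b) :
    HasDerivAt x (-(γ * ⟪φ t, x t⟫) • φ t) t :=
  (hx t (Ioo_subset_Icc_self ht)).hasDerivAt (Icc_mem_nhds ht.1 ht.2)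

lemma continuousOn_inner (hx : IsGradientFlowOn γ φ x S) (hφ : ContinuousOn φ S) :
    ContinuousOn (fun t ↦ ⟪φ t, x t⟫) S :=
  hφ.inner hx.continuousOn

lemma norm_sq_sub_norm_sq (hx : IsGradientFlowOn γ φ x (Icc a b)) (hab : a ≤ b)
    (hφ : ContinuousOn φ (Icc a b)) :
    ‖x a‖ ^ 2 - ‖x b‖ ^ 2 = 2 * γ * ∫ t in a..b, ⟪φ t, x t⟫ ^ 2 := by
  have hderiv : ∀ t ∈ Ioo a b, HasDerivAt (‖x ·‖ ^ 2) (-(2 * γ) * ⟪φ t, x t⟫ ^ 2) t :=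
    fun t ht ↦ by
      convert (hx.hasDerivAt ht).norm_sq using 1
      rw [inner_smul_right, real_inner_comm]
      ring
  have hint : IntervalIntegrable (fun t ↦ ⟪φ t, x t⟫ ^ 2) volume a b :=
    ((hx.continuousOn_inner hφ).pow 2).intervalIntegrable_of_Icc hab
  have ftc := intervalIntegral.integral_eq_sub_of_hasDerivAt_of_le hab
    (hx.continuousOn.norm.fun_pow 2) hderiv (hint.const_mul _)
  rw [intervalIntegral.integral_const_mul] at ftc
  linarith

lemma norm_sub_le (hx : IsGradientFlowOn γ φ x (Icc a b)) (hγ : 0 ≤ γ)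
    (hφ : ContinuousOn φ (Icc a b)) (hM : ∀ t ∈ Icc a b, ‖φ t‖ ≤ M) {s : ℝ} (hs : s ∈ Icc a b) :
    ‖x s - x a‖ ≤ M * γ * ∫ t in a..b, |⟪φ t, x t⟫| := by
  have hM0 : 0 ≤ M := (norm_nonneg _).trans (hM s hs)
  have hsub : Icc a s ⊆ Icc a b := Icc_subset_Icc_right hs.2
  have hxs : IsGradientFlowOn γ φ x (Icc a s) := hx.mono hsub
  have hcont : ContinuousOn (fun t ↦ |⟪φ t, x t⟫|) (Icc a b) := (hx.continuousOn_inner hφ).abs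
  have speed_le : ∀ t ∈ Ioo a s, ‖deriv x t‖ ≤ M * γ * |⟪φ t, x t⟫| := fun t ht ↦ by
    rw [(hxs.hasDerivAt ht).deriv, norm_smul, norm_neg, norm_mul, Real.norm_of_nonneg hγ,
      Real.norm_eq_abs, mul_comm, ← mul_assoc]
    gcongr
    exact hM t (hsub (Ioo_subset_Icc_self ht))
  calc ‖x s - x a‖ ≤ ∫ t in a..s, M * γ * |⟪φ t, x t⟫| :=
        norm_sub_le_integral_of_norm_deriv_le_of_le hs.1 hxs.continuousOn
          (fun t ht ↦ (hxs.hasDerivAt ht).differentiableAt.differentiableWithinAt)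
          (.of_forall speed_le) (((hcont.mono hsub).intervalIntegrable_of_Icc hs.1).const_mul _)
    _ = M * γ * ∫ t in a..s, |⟪φ t, x t⟫| := intervalIntegral.integral_const_mul _ _
    _ ≤ M * γ * ∫ t in a..b, |⟪φ t, x t⟫| := by
        gcongr
        exact intervalIntegral.integral_mono_interval le_rfl hs.1 hs.2
          (.of_forall fun _ ↦ abs_nonneg _) (hcont.intervalIntegrable_of_Icc (hs.1.trans hs.2))

lemma abs_inner_initial_le (hx : IsGradientFlowOn γ φ x (Icc a b)) (hγ : 0 ≤ γ)
    (hφ : ContinuousOn φ (Icc a b)) (hM : ∀ t ∈ Icc a b, ‖φ t‖ ≤ M) {s : ℝ} (hs : s ∈ Icc a b) :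
    |⟪φ s, x a⟫| ≤ |⟪φ s, x s⟫| + M ^ 2 * γ * ∫ t in a..b, |⟪φ t, x t⟫| := by
  have hM0 : 0 ≤ M := (norm_nonneg _).trans (hM s hs)
  calc |⟪φ s, x a⟫| = |⟪φ s, x s⟫ - ⟪φ s, x s - x a⟫| := by rw [inner_sub_right, sub_sub_cancel]
    _ ≤ |⟪φ s, x s⟫| + |⟪φ s, x s - x a⟫| := abs_sub _ _
    _ ≤ |⟪φ s, x s⟫| + ‖φ s‖ * ‖x s - x a‖ := by gcongr; exact abs_real_inner_le_norm _ _
    _ ≤ |⟪φ s, x s⟫| + M * (M * γ * ∫ t in a..b, |⟪φ t, x t⟫|) := by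
        gcongr
        exacts [hM s hs, hx.norm_sub_le hγ hφ hM hs]
    _ = |⟪φ s, x s⟫| + M ^ 2 * γ * ∫ t in a..b, |⟪φ t, x t⟫| := by ring

lemma integral_inner_initial_sq_le (hx : IsGradientFlowOn γ φ x (Icc a b)) (hab : a ≤ b)
    (hγ : 0 ≤ γ) (hφ : ContinuousOn φ (Icc a b)) (hM : ∀ t ∈ Icc a b, ‖φ t‖ ≤ M) :
    ∫ s in a..b, ⟪φ s, x a⟫ ^ 2 ≤
      (1 + M ^ 2 * γ * (b - a)) ^ 2 * ∫ s in a..b, ⟪φ s, x s⟫ ^ 2 := by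
  have hcont : ContinuousOn (fun t ↦ |⟪φ t, x t⟫|) (Icc a b) := (hx.continuousOn_inner hφ).abs
  calc ∫ s in a..b, ⟪φ s, x a⟫ ^ 2
      ≤ ∫ s in a..b, (|⟪φ s, x s⟫| + M ^ 2 * γ * ∫ t in a..b, |⟪φ t, x t⟫|) ^ 2 := by
        refine intervalIntegral.integral_mono_on hab
          (((hφ.inner continuousOn_const).pow 2).intervalIntegrable_of_Icc hab)
          (((hcont.add continuousOn_const).pow 2).intervalIntegrable_of_Icc hab) fun s hs ↦ ?_
        exact sq_le_sq.2 ((hx.abs_inner_initial_le hγ hφ hM hs).trans (le_abs_self _))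
    _ ≤ (1 + M ^ 2 * γ * (b - a)) ^ 2 * ∫ s in a..b, |⟪φ s, x s⟫| ^ 2 :=
        integral_add_mul_integral_sq_le hab (by positivity) (hcont.intervalIntegrable_of_Icc hab)
          ((hcont.pow 2).intervalIntegrable_of_Icc hab)
    _ = (1 + M ^ 2 * γ * (b - a)) ^ 2 * ∫ s in a..b, ⟪φ s, x s⟫ ^ 2 := by simp only [sq_abs]

lemma norm_sq_le_of_isExciting (hx : IsGradientFlowOn γ φ x (Icc a b)) (hab : a ≤ b) (hγ : 0 ≤ γ)
    (hφ : ContinuousOn φ (Icc a b)) (hM : ∀ t ∈ Icc a b, ‖φ t‖ ≤ M) (hexc : IsExciting φ a b η) :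
    ‖x b‖ ^ 2 ≤ (1 - 2 * η * γ / (1 + M ^ 2 * γ * (b - a)) ^ 2) * ‖x a‖ ^ 2 := by
  have : 0 ≤ b - a := sub_nonneg.2 hab
  have excitation : η * ‖x a‖ ^ 2 ≤
      (1 + M ^ 2 * γ * (b - a)) ^ 2 * ∫ s in a..b, ⟪φ s, x s⟫ ^ 2 :=
    (hexc (x a)).trans (hx.integral_inner_initial_sq_le hab hγ hφ hM)
  have decrease : 2 * η * γ / (1 + M ^ 2 * γ * (b - a)) ^ 2 * ‖x a‖ ^ 2 ≤
      ‖x a‖ ^ 2 - ‖x b‖ ^ 2 := by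
    rw [hx.norm_sq_sub_norm_sq hab hφ, div_mul_eq_mul_div, div_le_iff₀ (by positivity)]
    linarith [mul_le_mul_of_nonneg_left excitation (by positivity : 0 ≤ 2 * γ)]
  linarith

lemma norm_le_sqrt_mul_of_isExciting (hx : IsGradientFlowOn γ φ x (Icc a b)) (hab : a ≤ b)
    (hγ : 0 ≤ γ) (hφ : ContinuousOn φ (Icc a b)) (hM : ∀ t ∈ Icc a b, ‖φ t‖ ≤ M)
    (hexc : IsExciting φ a b η) :
    ‖x b‖ ≤ √(1 - 2 * η * γ / (1 + M ^ 2 * γ * (b - a)) ^ 2) * ‖x a‖ := by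
  rw [← Real.sqrt_sq (norm_nonneg (x a)), ← Real.sqrt_mul' _ (sq_nonneg _)]
  exact Real.le_sqrt_of_sq_le (hx.norm_sq_le_of_isExciting hab hγ hφ hM hexc)

end IsGradientFlowOn

theorem stmt17_general [Nontrivial E] {δ α : ℝ} (hγ : 0 < γ) (hδ : 0 < δ) (hη : 0 < η)
    (hφ : ContinuousOn φ (Ici 0)) (hM : ∀ t ∈ Ici 0, ‖φ t‖ ≤ M)
    (hexc : ∀ k : ℕ, IsExciting φ (k * δ) ((k + 1) * δ) η)
    (hα : α = 2 * η * γ / (1 + M ^ 2 * γ * δ) ^ 2) :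
    0 < α ∧ α < 1 ∧ ∀ x : ℝ → E, IsGradientFlowOn γ φ x (Ici 0) →
      ∀ j : ℕ, ‖x (j * δ)‖ ≤ (1 - α) ^ ((j : ℝ) / 2) * ‖x 0‖ := by
  have hle (k : ℕ) : k * δ ≤ (k + 1) * δ := by gcongr; linarith
  have hlen (k : ℕ) : (k + 1) * δ - k * δ = δ := by ring
  have hsub (k : ℕ) : Icc (k * δ) ((k + 1) * δ) ⊆ Ici 0 :=
    fun t ht ↦ (by positivity : 0 ≤ k * δ).trans ht.1
  have level_le : η ≤ M ^ 2 * δ :=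
    hlen 0 ▸ (hexc 0).level_le_sq_mul_sub (hle 0) fun t ht ↦ hM t (hsub 0 ht)
  have hα_lt : α < 1 := by
    rw [hα, div_lt_one (by positivity)]
    linarith [mul_le_mul_of_nonneg_right level_le hγ.le, sq_nonneg (M ^ 2 * γ * δ)]
  refine ⟨by rw [hα]; positivity, hα_lt, fun x hx j ↦ ?_⟩
  have window (k : ℕ) : ‖x ((k + 1 : ℕ) * δ)‖ ≤ √(1 - α) * ‖x (k * δ)‖ := by
    simpa only [hlen, ← hα, Nat.cast_add_one] using
      (hx.mono (hsub k)).norm_le_sqrt_mul_of_isExciting (hle k) hγ.le (hφ.mono (hsub k))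
        (fun t ht ↦ hM t (hsub k ht)) (hexc k)
  simpa [Real.rpow_div_two_eq_sqrt _ (sub_nonneg.2 hα_lt.le)] using
    le_geom (u := fun k : ℕ ↦ ‖x (k * δ)‖) (Real.sqrt_nonneg _) j fun k _ ↦ window k

end GradientFlow

/-- Geometric decay of the error norm across excitation windows
`[kδ, (k+1)δ]`. -/
theorem stmt17 (n : ℕ) (hn : 1 ≤ n) (γ : ℝ) (hγ : 0 < γ) (δ : ℝ) (hδ : 0 < δ)
    (φM : ℝ) (hφM : 0 ≤ φM) (η : ℝ) (hη : 0 < η)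
    (φ : ℝ → EuclideanSpace ℝ (Fin n)) (hφc : Continuous φ)
    (hbound : ∀ s : ℝ, 0 ≤ s → ‖φ s‖ ≤ φM)
    (hexc : ∀ k : ℕ, ∀ v : EuclideanSpace ℝ (Fin n),
      η * ‖v‖ ^ 2 ≤ ∫ s in ((k : ℝ) * δ)..(((k : ℝ) + 1) * δ), ⟪φ s, v⟫ ^ 2)
    (α : ℝ) (hα : α = 2 * η * γ / (1 + φM ^ 2 * γ * δ) ^ 2) :
    0 < α ∧ α < 1 ∧
      ∀ x : ℝ → EuclideanSpace ℝ (Fin n),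
        (∀ t : ℝ, 0 ≤ t → HasDerivAt x (-(γ * ⟪φ t, x t⟫) • φ t) t) →
        ∀ j : ℕ, ‖x ((j : ℝ) * δ)‖ ≤ (1 - α) ^ ((j : ℝ) / 2) * ‖x 0‖ :=
  have : Nonempty (Fin n) := ⟨⟨0, hn⟩⟩
  have h := stmt17_general hγ hδ hη hφc.continuousOn hbound hexc hα
  ⟨h.1, h.2.1, fun x hx ↦ h.2.2 x fun t ht ↦ (hx t ht).hasDerivWithinAt⟩
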